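/- The set c_{0,I(F)} = {f ∈ ℓ∞ : for every ε > 0, μ_n({i ∈ ℕ : ε ≤ |f i|}) → 0 as n → ∞} of bounded real sequences that are I(F)-convergent to 0 is a closed linear subspace of ℓ∞ (the Banach space of bounded real sequences with the supremum norm). -/

import Mathlib

open Filter

/-- `mu F n A = |A ∩ F n| / |F n|`. -/
noncomputable def mu (F : ℕ → Finset ℕ) (n : ℕ) (A : Set ℕ) : ℝ :=
  (A ∩ (F n : Set ℕ)).ncard / (F n).card

lemma mu_nonneg_aux (F : ℕ → Finset ℕ) (n : ℕ) (A : Set ℕ) : 0 ≤ mu F n A := by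
  unfold mu; positivity

lemma mu_mono_aux (F : ℕ → Finset ℕ) (n : ℕ) {A B : Set ℕ} (h : A ⊆ B) :
    mu F n A ≤ mu F n B := by
  unfold mu
  have : (A ∩ (F n : Set ℕ)).ncard ≤ (B ∩ (F n : Set ℕ)).ncard :=
    Set.ncard_le_ncard (Set.inter_subset_inter_left _ h)
      ((F n).finite_toSet.subset Set.inter_subset_right)
  gcongr

lemma mu_union_aux (F : ℕ → Finset ℕ) (n : ℕ) (A B : Set ℕ) :
    mu F n (A ∪ B) ≤ mu F n A + mu F n B := by
  unfold mu
  rw [← add_div, Set.union_inter_distrib_right]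
  have := Set.ncard_union_le (A ∩ (F n : Set ℕ)) (B ∩ (F n : Set ℕ))
  gcongr
  exact_mod_cast this

lemma mu_tendsto_mono_aux (F : ℕ → Finset ℕ) {A B : Set ℕ} (h : A ⊆ B)
    (hB : Tendsto (fun n => mu F n B) atTop (nhds 0)) :
    Tendsto (fun n => mu F n A) atTop (nhds 0) :=
  squeeze_zero (fun n => mu_nonneg_aux F n A) (fun n => mu_mono_aux F n h) hB

/-- The set of bounded real sequences that are `I(F)`-convergent to `0` is a
closed linear subspace of `ℓ∞`. -/
theorem stmt11 (F : ℕ → Finset ℕ) (hne : ∀ n, (F n).Nonempty)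
    (hcard : Tendsto (fun n => (F n).card) atTop atTop) :
    ∃ S : Submodule ℝ (lp (fun _ : ℕ => ℝ) ⊤),
      (S : Set (lp (fun _ : ℕ => ℝ) ⊤)) =
        {f : lp (fun _ : ℕ => ℝ) ⊤ | ∀ ε : ℝ, 0 < ε →
          Tendsto (fun n => mu F n {i : ℕ | ε ≤ |f i|}) atTop (nhds 0)} ∧
      IsClosed (S : Set (lp (fun _ : ℕ => ℝ) ⊤)) := by
  refine ⟨{ carrier := {f : lp (fun _ : ℕ => ℝ) ⊤ | ∀ ε : ℝ, 0 < ε →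
          Tendsto (fun n => mu F n {i : ℕ | ε ≤ |f i|}) atTop (nhds 0)}
            add_mem' := ?_
            zero_mem' := ?_
            smul_mem' := ?_ }, rfl, ?_⟩
  · intro f g hf hg ε hε
    have h := (hf (ε / 2) (by positivity)).add (hg (ε / 2) (by positivity))
    rw [add_zero] at h
    refine squeeze_zero (fun n => mu_nonneg_aux F n _) (fun n => ?_) h
    refine (mu_mono_aux F n ?_).trans (mu_union_aux F n _ _)
    intro i hi
    have hi' : ε ≤ |f i + g i| := hi
    have h3 := abs_add_le (f i) (g i)
    by_cases h1 : ε / 2 ≤ |f i|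
    · exact Or.inl h1
    · refine Or.inr ?_
      change ε / 2 ≤ |g i|
      linarith
  · intro ε hε
    have : {i : ℕ | ε ≤ |(0 : lp (fun _ : ℕ => ℝ) ⊤) i|} = ∅ := by
      ext i
      simp [hε]
    rw [this]
    simp [mu]
  · intro c f hf ε hε
    have hc : 0 < |c| + 1 := by positivity
    refine mu_tendsto_mono_aux F ?_ (hf (ε / (|c| + 1)) (by positivity))
    intro i hi
    have hi' : ε ≤ |c * f i| := hi
    change ε / (|c| + 1) ≤ |f i|
    rw [div_le_iff₀ hc]
    rw [abs_mul] at hi'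
    nlinarith [abs_nonneg (f i)]
  · refine isClosed_of_closure_subset ?_
    intro f hf ε hε
    obtain ⟨g, hg, hfg⟩ := Metric.mem_closure_iff.1 hf (ε / 2) (by positivity)
    refine mu_tendsto_mono_aux F ?_ (hg (ε / 2) (by positivity))
    intro i hi
    have hi' : ε ≤ |f i| := hi
    change ε / 2 ≤ |g i|
    rw [dist_eq_norm] at hfg
    have h1 : |f i - g i| ≤ ‖f - g‖ := lp.norm_apply_le_norm ENNReal.top_ne_zero (f - g) i
    have h2 := abs_sub_abs_le_abs_sub (f i) (g i)
    linarith
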